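/- Let R > 0, B > 0, h > 0, let m ≥ 0 be an integer and k ≥ 1 an integer. Then for every complex linear subspace V of C_c^∞((0,R);ℂ) of dimension k + 1 there exists a nonzero u ∈ V with q_m(u) ≥ 2 h B k ∫₀^R |u(r)|² r dr. (This is the min-max formulation of the statement that the k-th Dirichlet eigenvalue of the fiber operator at angular momentum m ≥ 0 is at least 2hBk; in particular the second eigenvalue is at least 2hB.) -/

import Mathlib

/-!
Put `c = B / (2h)`, `φ₀(r) = r ^ m * exp (-c r² / 2)` and `W_m(r) = r ^ (2m+1) * exp (-c r²)`.
Since `φ₀` is annihilated by `d/dr - (m/r - c r)`, writing `u = φ₀ f` and integrating by parts gives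
`q_m(u) = h² ∫ |f'|² W_m`, while `∫ |u|² r = ∫ |f|² W_m`.

In a `(k+1)`-dimensional space some nonzero `u` satisfies the `k` linear conditions that `f` is
orthogonal to `1, r², …, r^(2(k-1))` with respect to `W_m`. These polynomials span the same space as
the first `k` Laguerre eigenfunctions, and the claim becomes the weighted Poincaré inequality
`4ck ∫ |f|² W_m ≤ ∫ |f'|² W_m` for such `f` (`laguerre_poincare`), which may be checked separately
on real and imaginary parts.

That inequality is proved by induction on `k` with a ladder argument. Orthogonality to `1` says that
the primitive of `f W_m` vanishes at both ends, so `f W_m = -(φ r W_m)'` for some `φ` vanishing at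
both ends. This `φ` is orthogonal to one power fewer with respect to `W_{m+1}`, and
`∫ |f|² W_m = ∫ |φ'|² W_{m+1} + 4c ∫ |φ|² W_{m+1}`, which by induction is at least
`4ck ∫ |φ|² W_{m+1}`. On the other hand `∫ |f|² W_m = ∫ f' φ r W_m`, and the inequality of
arithmetic and geometric means applied to the right-hand side closes the induction.
-/

open MeasureTheory Filter Topology

noncomputable section

/-- The fiber quadratic form at angular momentum `m`:
`q_m(u) = h²∫₀^R (|u′(r)|² + (m/r − Br/(2h))²|u(r)|²) r dr − hB∫₀^R |u(r)|² r dr`. -/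
def qm (R B h : ℝ) (m : ℤ) (u : ℝ → ℂ) : ℝ :=
  h ^ 2 * (∫ r in Set.Ioo (0:ℝ) R,
      (‖deriv u r‖ ^ 2 + ((m : ℝ) / r - B * r / (2 * h)) ^ 2 * ‖u r‖ ^ 2) * r)
    - h * B * ∫ r in Set.Ioo (0:ℝ) R, ‖u r‖ ^ 2 * r

/-- `u ∈ C_c^∞((0,R); ℂ)`. -/
def IsCptSmooth0R (R : ℝ) (u : ℝ → ℂ) : Prop :=
  ContDiff ℝ (⊤ : ℕ∞) u ∧ HasCompactSupport u ∧ tsupport u ⊆ Set.Ioo 0 R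

/-- The weight `r ^ (2m+1) * exp (-c r²)`, i.e. the Laguerre weight `t ^ m e ^ (-t) dt` in the
variable `t = c r²`, up to a constant. -/
def lagW (c : ℝ) (m : ℕ) (r : ℝ) : ℝ := r ^ (2 * m + 1) * Real.exp (-c * r ^ 2)

lemma continuous_lagW (c : ℝ) (m : ℕ) : Continuous (lagW c m) := by
  unfold lagW; fun_prop

lemma lagW_pos (c : ℝ) (m : ℕ) {r : ℝ} (hr : 0 < r) : 0 < lagW c m r := by
  unfold lagW; positivity

lemma lagW_succ (c : ℝ) (m : ℕ) (r : ℝ) : lagW c (m + 1) r = r ^ 2 * lagW c m r := by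
  unfold lagW; ring

lemma hasDerivAt_exp_sq (c r : ℝ) :
    HasDerivAt (fun x : ℝ => Real.exp (-c * x ^ 2)) (-2 * c * r * Real.exp (-c * r ^ 2)) r := by
  refine (((hasDerivAt_pow 2 r).const_mul (-c)).exp).congr_deriv ?_
  simp; ring

/-- Logarithmic derivative of `r * W_m(r)`. -/
lemma hasDerivAt_mul_lagW (c : ℝ) (m : ℕ) (r : ℝ) :
    HasDerivAt (fun x => x * lagW c m x)
      ((2 * m + 2 - 2 * c * r ^ 2) * lagW c m r) r := by
  have h := (hasDerivAt_pow (2 * m + 2) r).fun_mul (hasDerivAt_exp_sq c r)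
  have hfun : (fun x => x * lagW c m x) = fun x => x ^ (2 * m + 2) * Real.exp (-c * x ^ 2) := by
    ext x; simp only [lagW]; ring
  rw [hfun]
  refine h.congr_deriv ?_
  simp [lagW]; ring

/-- Fundamental theorem of calculus on an interval in `(0, ∞)`, for a primitive vanishing at both
ends. -/
lemma integral_zero_of_deriv {a b : ℝ} (ha : 0 < a) (hab : a ≤ b) {F F' : ℝ → ℝ}
    (hF : ∀ x, 0 < x → HasDerivAt F (F' x) x) (hc : ContinuousOn F' (Set.Ioi 0))
    (h0 : F a = 0) (h1 : F b = 0) : ∫ x in a..b, F' x = 0 := by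
  have hsub : Set.uIcc a b ⊆ Set.Ioi 0 := by
    rw [Set.uIcc_of_le hab]; exact fun x hx => lt_of_lt_of_le ha hx.1
  rw [intervalIntegral.integral_eq_sub_of_hasDerivAt (f := F) (fun x hx => hF x (hsub hx))
    (hc.mono hsub).intervalIntegrable, h0, h1, sub_zero]

lemma intervalIntegrable_of_Ioi {a b : ℝ} (ha : 0 < a) (hab : a ≤ b) {F : ℝ → ℝ}
    (hc : ContinuousOn F (Set.Ioi 0)) : IntervalIntegrable F volume a b := by
  apply (hc.mono _).intervalIntegrable
  rw [Set.uIcc_of_le hab]; exact fun x hx => lt_of_lt_of_le ha hx.1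

/-- Weighted Poincaré inequality for functions vanishing at both ends of `[a, b] ⊆ (0, ∞)` and
orthogonal to the first `k` even powers. -/
lemma laguerre_poincare (c a b : ℝ) (hcpos : 0 < c) (ha : 0 < a) (hab : a ≤ b) (k : ℕ) :
    ∀ (m : ℕ) (g g' : ℝ → ℝ), (∀ x, 0 < x → HasDerivAt g (g' x) x) →
      ContinuousOn g' (Set.Ioi 0) → g a = 0 → g b = 0 →
      (∀ j < k, ∫ r in a..b, g r * r ^ (2 * j) * lagW c m r = 0) →
      4 * c * k * ∫ r in a..b, g r ^ 2 * lagW c m r ≤ ∫ r in a..b, g' r ^ 2 * lagW c m r := by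
  induction k with
  | zero =>
    intro m g g' _ _ _ _ _
    simp only [Nat.cast_zero, mul_zero, zero_mul]
    apply intervalIntegral.integral_nonneg hab
    intro r hr
    exact mul_nonneg (sq_nonneg _) (lagW_pos c m (lt_of_lt_of_le ha hr.1)).le
  | succ k ih =>
    intro m g g' hg hg' hga hgb horth
    have hW : ContinuousOn (lagW c m) (Set.Ioi 0) := (continuous_lagW c m).continuousOn
    have hgc : ContinuousOn g (Set.Ioi 0) := fun x hx => (hg x hx).continuousAt.continuousWithinAt
    have hgW : ContinuousOn (fun x => g x * lagW c m x) (Set.Ioi 0) := hgc.mul hW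
    set Φ : ℝ → ℝ := fun x => ∫ r in a..x, g r * lagW c m r with hΦ
    have hΦd : ∀ x, 0 < x → HasDerivAt Φ (g x * lagW c m x) x := by
      intro x hx
      apply intervalIntegral.integral_hasDerivAt_right
      · apply (hgW.mono _).intervalIntegrable
        intro y hy
        exact lt_of_lt_of_le (lt_min ha hx) hy.1
      · exact hgW.stronglyMeasurableAtFilter isOpen_Ioi x hx
      · exact hgW.continuousAt (Ioi_mem_nhds hx)
    have hΦa : Φ a = 0 := by simp [hΦ]
    have hΦb : Φ b = 0 := by
      have := horth 0 (Nat.succ_pos k)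
      simpa [hΦ] using this
    have hΦc : ContinuousOn Φ (Set.Ioi 0) := fun x hx => (hΦd x hx).continuousAt.continuousWithinAt
    set φ : ℝ → ℝ := fun x => - Φ x / (x * lagW c m x) with hφ
    set p : ℝ → ℝ := fun x => 2 * m + 2 - 2 * c * x ^ 2 with hp
    set φ' : ℝ → ℝ := fun x => - (g x + p x * φ x) / x with hφ'
    have hφd : ∀ x, 0 < x → HasDerivAt φ (φ' x) x := by
      intro x hx
      have hw := lagW_pos c m hx
      have h := (hΦd x hx).fun_neg.fun_div (hasDerivAt_mul_lagW c m x) (mul_pos hx hw).ne'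
      refine h.congr_deriv ?_
      simp only [hφ', hφ, hp]
      field_simp
      ring
    have hφa : φ a = 0 := by simp [hφ, hΦa]
    have hφb : φ b = 0 := by simp [hφ, hΦb]
    have hφc : ContinuousOn φ (Set.Ioi 0) := fun x hx => (hφd x hx).continuousAt.continuousWithinAt
    have hpc : ContinuousOn p (Set.Ioi 0) := by fun_prop
    have hφ'c : ContinuousOn φ' (Set.Ioi 0) :=
      ((hgc.add (hpc.mul hφc)).neg).div continuousOn_id (fun x hx => ne_of_gt hx)
    have hΦφ : ∀ x, 0 < x → Φ x = - (φ x * (x * lagW c m x)) := by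
      intro x hx
      have hw := lagW_pos c m hx
      simp only [hφ]
      field_simp
    have hgφ : ∀ x, 0 < x → g x = - (x * φ' x) - p x * φ x := by
      intro x hx
      simp only [hφ']
      field_simp
      ring
    have hpos : ∀ x ∈ Set.uIcc a b, 0 < x := by
      rw [Set.uIcc_of_le hab]; exact fun x hx => lt_of_lt_of_le ha hx.1
    -- `φ` is orthogonal to one power fewer, for the next weight
    have horth' : ∀ j < k, ∫ r in a..b, φ r * r ^ (2 * j) * lagW c (m + 1) r = 0 := by
      intro j hj
      have h1 : ∫ r in a..b, (g r * lagW c m r * r ^ (2 * j + 2)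
          + Φ r * ((2 * j + 2 : ℕ) * r ^ (2 * j + 1))) = 0 := by
        apply integral_zero_of_deriv ha hab (F := fun x => Φ x * x ^ (2 * j + 2))
        · intro x hx
          exact (hΦd x hx).fun_mul (hasDerivAt_pow (2 * j + 2) x)
        · fun_prop
        · simp [hΦa]
        · simp [hΦb]
      rw [intervalIntegral.integral_add (intervalIntegrable_of_Ioi ha hab (by fun_prop))
        (intervalIntegrable_of_Ioi ha hab (by fun_prop))] at h1
      have h2 : ∫ r in a..b, g r * lagW c m r * r ^ (2 * j + 2) = 0 := by
        rw [← horth (j + 1) (by omega)]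
        congr 1; ext r; ring
      have h3 : ∫ r in a..b, Φ r * ((2 * j + 2 : ℕ) * r ^ (2 * j + 1))
          = - ((2 * j + 2 : ℕ) : ℝ) * ∫ r in a..b, φ r * r ^ (2 * j) * lagW c (m + 1) r := by
        rw [← intervalIntegral.integral_const_mul]
        apply intervalIntegral.integral_congr
        intro r hr
        simp only [hΦφ r (hpos r hr), lagW_succ]
        ring
      rw [h2, h3, zero_add] at h1
      rcases mul_eq_zero.1 h1 with h | h
      · exfalso
        have : ((2 * j + 2 : ℕ) : ℝ) = 0 := by linarith
        norm_cast at this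
      · exact h
    have hIH := ih (m + 1) φ φ' hφd hφ'c hφa hφb horth'
    have hW1 : ContinuousOn (lagW c (m + 1)) (Set.Ioi 0) := (continuous_lagW c (m + 1)).continuousOn
    -- `∫ |g|² W_m = ∫ |φ'|² W_{m+1} + 4c ∫ |φ|² W_{m+1}`
    have hnorm : ∫ r in a..b, g r ^ 2 * lagW c m r
        = (∫ r in a..b, φ' r ^ 2 * lagW c (m + 1) r)
          + 4 * c * ∫ r in a..b, φ r ^ 2 * lagW c (m + 1) r := by
      have h0 : ∫ r in a..b, (-(4 * c * r) * (r * lagW c m r) * φ r ^ 2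
          + p r * (p r * lagW c m r) * φ r ^ 2
          + p r * (r * lagW c m r) * (2 * φ r * φ' r)) = 0 := by
        apply integral_zero_of_deriv ha hab (F := fun x => p x * (x * lagW c m x) * φ x ^ 2)
        · intro x hx
          have hpd : HasDerivAt p (-(4 * c * x)) x := by
            have := ((hasDerivAt_pow 2 x).const_mul (2 * c)).const_sub (2 * (m : ℝ) + 2)
            refine this.congr_deriv ?_
            simp; ring
          have := (hpd.fun_mul (hasDerivAt_mul_lagW c m x)).fun_mul ((hφd x hx).fun_pow 2)
          refine this.congr_deriv ?_
          simp [hp]; ring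
        · fun_prop
        · simp [hφa]
        · simp [hφb]
      rw [← intervalIntegral.integral_const_mul, ← intervalIntegral.integral_add
        (intervalIntegrable_of_Ioi ha hab (by fun_prop))
        (intervalIntegrable_of_Ioi ha hab (by fun_prop)), ← sub_eq_zero,
        ← intervalIntegral.integral_sub
        (intervalIntegrable_of_Ioi ha hab (by fun_prop))
        (intervalIntegrable_of_Ioi ha hab (by fun_prop)), ← h0]
      apply intervalIntegral.integral_congr
      intro r hr
      simp only [hgφ r (hpos r hr), lagW_succ]
      ring
    -- `∫ |g|² W_m = ∫ g' φ r W_m`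
    have hpair : ∫ r in a..b, g r ^ 2 * lagW c m r
        = ∫ r in a..b, g' r * φ r * (r * lagW c m r) := by
      have h0 : ∫ r in a..b, (g' r * Φ r + g r * (g r * lagW c m r)) = 0 := by
        apply integral_zero_of_deriv ha hab (F := fun x => g x * Φ x)
        · intro x hx
          exact (hg x hx).fun_mul (hΦd x hx)
        · fun_prop
        · simp [hΦa]
        · simp [hΦb]
      rw [← sub_eq_zero, ← intervalIntegral.integral_sub
        (intervalIntegrable_of_Ioi ha hab (by fun_prop))
        (intervalIntegrable_of_Ioi ha hab (by fun_prop)), ← h0]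
      apply intervalIntegral.integral_congr
      intro r hr
      simp only [hΦφ r (hpos r hr)]
      ring
    set lam : ℝ := 4 * c * ((k + 1 : ℕ) : ℝ) with hlam
    have hlpos : 0 < lam := by rw [hlam]; positivity
    have hamgm : 2 * lam * ∫ r in a..b, g' r * φ r * (r * lagW c m r)
        ≤ (∫ r in a..b, g' r ^ 2 * lagW c m r)
          + lam ^ 2 * ∫ r in a..b, φ r ^ 2 * lagW c (m + 1) r := by
      rw [← intervalIntegral.integral_const_mul, ← intervalIntegral.integral_const_mul,
        ← intervalIntegral.integral_add
        (intervalIntegrable_of_Ioi ha hab (by fun_prop))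
        (intervalIntegrable_of_Ioi ha hab (by fun_prop))]
      apply intervalIntegral.integral_mono_on hab
        (intervalIntegrable_of_Ioi ha hab (by fun_prop))
        (intervalIntegrable_of_Ioi ha hab (by fun_prop))
      intro r hr
      have hw := lagW_pos c m (lt_of_lt_of_le ha hr.1)
      rw [lagW_succ]
      nlinarith [mul_nonneg (sq_nonneg (g' r - lam * (r * φ r))) hw.le]
    rw [← hpair] at hamgm
    have hlow : lam * ∫ r in a..b, φ r ^ 2 * lagW c (m + 1) r
        ≤ ∫ r in a..b, g r ^ 2 * lagW c m r := by
      rw [hnorm, hlam]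
      push_cast
      linarith
    have := mul_le_mul_of_nonneg_left hlow hlpos.le
    nlinarith

/-- The form bound for real functions: `laguerre_poincare` transported by `v = r^m e^(-c r²/2) g`. -/
lemma real_form_bound (c a b : ℝ) (hcpos : 0 < c) (ha : 0 < a) (hab : a ≤ b) (k m : ℕ)
    (v v' : ℝ → ℝ) (hv : ∀ x, HasDerivAt v (v' x) x) (hv' : Continuous v')
    (hva : v a = 0) (hvb : v b = 0)
    (horth : ∀ j < k, ∫ r in a..b, v r * (r ^ (m + 2 * j + 1) * Real.exp (-(c / 2) * r ^ 2)) = 0) :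
    4 * c * k * ∫ r in a..b, v r ^ 2 * r ≤
      (∫ r in a..b, (v' r ^ 2 + (m / r - c * r) ^ 2 * v r ^ 2) * r)
        - 2 * c * ∫ r in a..b, v r ^ 2 * r := by
  have hvc : Continuous v := continuous_iff_continuousAt.2 fun x => (hv x).continuousAt
  set f0 : ℝ → ℝ := fun r => r ^ m * Real.exp (-(c / 2) * r ^ 2) with hf0
  have hf0pos : ∀ x, 0 < x → 0 < f0 x := fun x hx => by simp only [hf0]; positivity
  have hf0c : Continuous f0 := by fun_prop
  have hf0W : ∀ x, lagW c m x = f0 x ^ 2 * x := by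
    intro x
    have : Real.exp (-c * x ^ 2) = Real.exp (-(c / 2) * x ^ 2) ^ 2 := by
      rw [← Real.exp_nat_mul]; congr 1; push_cast; ring
    simp only [hf0, lagW, this]; ring
  set α : ℝ → ℝ := fun r => m / r - c * r with hα
  have hαc : ContinuousOn α (Set.Ioi 0) :=
    (continuousOn_const.div continuousOn_id fun x hx => ne_of_gt hx).sub (by fun_prop)
  have hf0d : ∀ x, 0 < x → HasDerivAt f0 (α x * f0 x) x := by
    intro x hx
    refine ((hasDerivAt_pow m x).fun_mul (hasDerivAt_exp_sq (c / 2) x)).congr_deriv ?_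
    simp only [hα, hf0]
    rcases m with _ | n
    · push_cast; ring
    · simp only [Nat.add_sub_cancel]
      field_simp
      ring
  have hpos : ∀ x ∈ Set.uIcc a b, 0 < x := by
    rw [Set.uIcc_of_le hab]; exact fun x hx => lt_of_lt_of_le ha hx.1
  have hvo : ContinuousOn v (Set.Ioi 0) := hvc.continuousOn
  have hvo' : ContinuousOn v' (Set.Ioi 0) := hv'.continuousOn
  have key := laguerre_poincare c a b hcpos ha hab k m (fun x => v x / f0 x)
    (fun x => (v' x - α x * v x) / f0 x)
    (by
      intro x hx
      have h0 := hf0pos x hx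
      refine ((hv x).fun_div (hf0d x hx) h0.ne').congr_deriv ?_
      field_simp)
    ((hvo'.sub (hαc.mul hvo)).div hf0c.continuousOn fun x hx => (hf0pos x hx).ne')
    (by simp [hva]) (by simp [hvb])
    (by
      intro j hj
      rw [← horth j hj]
      apply intervalIntegral.integral_congr
      intro r hr
      have h0 := hf0pos r (hpos r hr)
      simp only [hf0W]
      field_simp
      simp only [hf0]
      ring_nf)
  have e1 : ∫ r in a..b, (v r / f0 r) ^ 2 * lagW c m r = ∫ r in a..b, v r ^ 2 * r := by
    apply intervalIntegral.integral_congr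
    intro r hr
    have h0 := hf0pos r (hpos r hr)
    simp only [hf0W]
    field_simp
  have e2 : ∫ r in a..b, ((v' r - α r * v r) / f0 r) ^ 2 * lagW c m r
      = ∫ r in a..b, (v' r - α r * v r) ^ 2 * r := by
    apply intervalIntegral.integral_congr
    intro r hr
    have h0 := hf0pos r (hpos r hr)
    simp only [hf0W]
    field_simp
  have e3 : ∫ r in a..b, (v' r - α r * v r) ^ 2 * r
      = (∫ r in a..b, (v' r ^ 2 + α r ^ 2 * v r ^ 2) * r) - 2 * c * ∫ r in a..b, v r ^ 2 * r := by
    have h0 : ∫ r in a..b, (-(2 * c * r) * v r ^ 2 + (m - c * r ^ 2) * (2 * v r * v' r)) = 0 := by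
      apply integral_zero_of_deriv ha hab (F := fun x => (m - c * x ^ 2) * v x ^ 2)
      · intro x hx
        have h1 := ((hasDerivAt_pow 2 x).const_mul c).const_sub (m : ℝ)
        refine (h1.fun_mul ((hv x).fun_pow 2)).congr_deriv ?_
        push_cast; ring
      · fun_prop
      · simp [hva]
      · simp [hvb]
    symm
    rw [← intervalIntegral.integral_const_mul, ← intervalIntegral.integral_sub
      (intervalIntegrable_of_Ioi ha hab (by fun_prop))
      (intervalIntegrable_of_Ioi ha hab (by fun_prop)), ← sub_eq_zero,
      ← intervalIntegral.integral_sub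
      (intervalIntegrable_of_Ioi ha hab (by fun_prop))
      (intervalIntegrable_of_Ioi ha hab (by fun_prop)), ← h0]
    apply intervalIntegral.integral_congr
    intro r hr
    have := hpos r hr
    simp only [hα]
    field_simp
    ring
  simp only [e1, e2, e3] at key
  exact key

/-- A compact subset of `(0, R)` is contained in a compact subinterval, with room at both ends. -/
lemma exists_Ioo_of_compact {R : ℝ} (hR : 0 < R) {K : Set ℝ} (hK : IsCompact K)
    (hKR : K ⊆ Set.Ioo 0 R) : ∃ a b, 0 < a ∧ a ≤ b ∧ b < R ∧ K ⊆ Set.Ioo a b := by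
  have hmid : R / 2 ∈ Set.Ioo 0 R := ⟨by linarith, by linarith⟩
  have hK' : IsCompact (insert (R / 2) K) := hK.insert _
  have hsub : insert (R / 2) K ⊆ Set.Ioo 0 R := Set.insert_subset hmid hKR
  obtain ⟨a, haK, hal⟩ := hK'.exists_isLeast ⟨_, Set.mem_insert _ _⟩
  obtain ⟨b, hbK, hbu⟩ := hK'.exists_isGreatest ⟨_, Set.mem_insert _ _⟩
  have h1 := hsub haK
  have h2 := hsub hbK
  have h3 : a ≤ b := hal hbK
  refine ⟨a / 2, (b + R) / 2, by linarith [h1.1], by linarith [h1.1, h2.2],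
    by linarith [h2.2], fun x hx => ?_⟩
  have h4 : a ≤ x := hal (Set.mem_insert_of_mem _ hx)
  have h5 : x ≤ b := hbu (Set.mem_insert_of_mem _ hx)
  exact ⟨by linarith [h1.1], by linarith [h2.2]⟩

lemma setIntegral_Ioo_eq {E : Type*} [NormedAddCommGroup E] [NormedSpace ℝ E] {R a b : ℝ}
    (ha : 0 < a) (hab : a ≤ b) (hb : b < R) (F : ℝ → E)
    (hF : ∀ x, x ∉ Set.Ioo a b → F x = 0) :
    ∫ r in Set.Ioo (0:ℝ) R, F r = ∫ r in a..b, F r := by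
  rw [intervalIntegral.integral_of_le hab, integral_Ioc_eq_integral_Ioo]
  apply setIntegral_eq_of_subset_of_forall_sdiff_eq_zero measurableSet_Ioo
  · exact fun x hx => ⟨ha.trans hx.1, hx.2.trans hb⟩
  · exact fun x hx => hF x hx.2

/-- The form bound for a single function satisfying the orthogonality conditions. -/
lemma qm_bound (R B h : ℝ) (hR : 0 < R) (hB : 0 < B) (hh : 0 < h) (m k : ℕ) (u : ℝ → ℂ)
    (hu : IsCptSmooth0R R u)
    (horth : ∀ j < k, ∫ r in Set.Ioo (0:ℝ) R, u r *
      ((r ^ (m + 2 * j + 1) * Real.exp (-(B / (2 * h) / 2) * r ^ 2) : ℝ) : ℂ) = 0) :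
    qm R B h (m : ℤ) u ≥ 2 * h * B * k * ∫ r in Set.Ioo (0:ℝ) R, ‖u r‖ ^ 2 * r := by
  obtain ⟨hsm, hcs, hsup⟩ := hu
  obtain ⟨a, b, ha, hab, hb, hK⟩ := exists_Ioo_of_compact hR hcs.isCompact hsup
  set c := B / (2 * h) with hc
  have hcpos : 0 < c := by positivity
  have hu0 : ∀ x, x ∉ Set.Ioo a b → u x = 0 :=
    fun x hx => image_eq_zero_of_notMem_tsupport fun h' => hx (hK h')
  have hdu0 : ∀ x, x ∉ Set.Ioo a b → deriv u x = 0 := fun x hx => by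
    by_contra hne
    exact hx (hK (support_deriv_subset (𝕜 := ℝ) hne))
  have hdiff : Differentiable ℝ u := hsm.differentiable (by simp)
  have hdc : Continuous (deriv u) := hsm.continuous_deriv (by simp)
  have huc : Continuous u := hsm.continuous
  have hua : u a = 0 := hu0 a (by simp)
  have hub : u b = 0 := hu0 b (by simp)
  have hint : ∀ j < k, ∫ r in a..b, u r *
      ((r ^ (m + 2 * j + 1) * Real.exp (-(c / 2) * r ^ 2) : ℝ) : ℂ) = 0 := by
    intro j hj
    rw [← horth j hj, setIntegral_Ioo_eq ha hab hb]
    intro x hx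
    simp [hu0 x hx]
  have hre := real_form_bound c a b hcpos ha hab k m (fun x => (u x).re) (fun x => (deriv u x).re)
    (fun x => Complex.reCLM.hasFDerivAt.comp_hasDerivAt x (hdiff x).hasDerivAt)
    (by fun_prop) (by simp [hua]) (by simp [hub])
    (by
      intro j hj
      have h1 := Complex.reCLM.intervalIntegral_comp_comm (μ := volume) (a := a) (b := b)
        (f := fun r => u r * ((r ^ (m + 2 * j + 1) * Real.exp (-(c / 2) * r ^ 2) : ℝ) : ℂ))
        (Continuous.intervalIntegrable (by fun_prop) _ _)
      rw [hint j hj] at h1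
      simpa only [Complex.reCLM_apply, Complex.re_mul_ofReal, Complex.zero_re] using h1)
  have him := real_form_bound c a b hcpos ha hab k m (fun x => (u x).im) (fun x => (deriv u x).im)
    (fun x => Complex.imCLM.hasFDerivAt.comp_hasDerivAt x (hdiff x).hasDerivAt)
    (by fun_prop) (by simp [hua]) (by simp [hub])
    (by
      intro j hj
      have h1 := Complex.imCLM.intervalIntegral_comp_comm (μ := volume) (a := a) (b := b)
        (f := fun r => u r * ((r ^ (m + 2 * j + 1) * Real.exp (-(c / 2) * r ^ 2) : ℝ) : ℂ))
        (Continuous.intervalIntegrable (by fun_prop) _ _)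
      rw [hint j hj] at h1
      simpa only [Complex.imCLM_apply, Complex.im_mul_ofReal, Complex.zero_im] using h1)
  have hα : ContinuousOn (fun r : ℝ => (m : ℝ) / r - c * r) (Set.Ioi 0) :=
    (continuousOn_const.div continuousOn_id fun x hx => ne_of_gt hx).sub (by fun_prop)
  have hsq : ∀ z : ℂ, ‖z‖ ^ 2 = z.re ^ 2 + z.im ^ 2 := fun z => by
    rw [Complex.sq_norm, Complex.normSq_apply]; ring
  have hN : ∫ r in Set.Ioo (0:ℝ) R, ‖u r‖ ^ 2 * r
      = (∫ r in a..b, (u r).re ^ 2 * r) + ∫ r in a..b, (u r).im ^ 2 * r := by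
    rw [setIntegral_Ioo_eq ha hab hb _ (fun x hx => by simp [hu0 x hx]),
      ← intervalIntegral.integral_add (Continuous.intervalIntegrable (by fun_prop) _ _)
        (Continuous.intervalIntegrable (by fun_prop) _ _)]
    congr 1; ext r; rw [hsq]; ring
  have hcr : ∀ r : ℝ, B * r / (2 * h) = c * r := fun r => by rw [hc]; ring
  have hQ : ∫ r in Set.Ioo (0:ℝ) R,
      (‖deriv u r‖ ^ 2 + (((m : ℤ) : ℝ) / r - B * r / (2 * h)) ^ 2 * ‖u r‖ ^ 2) * r
      = (∫ r in a..b, ((deriv u r).re ^ 2 + (m / r - c * r) ^ 2 * (u r).re ^ 2) * r)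
        + ∫ r in a..b, ((deriv u r).im ^ 2 + (m / r - c * r) ^ 2 * (u r).im ^ 2) * r := by
    have hd1 : ContinuousOn (fun r => (deriv u r).re) (Set.Ioi 0) := by fun_prop
    have hd2 : ContinuousOn (fun r => (deriv u r).im) (Set.Ioi 0) := by fun_prop
    have hd3 : ContinuousOn (fun r => (u r).re) (Set.Ioi 0) := by fun_prop
    have hd4 : ContinuousOn (fun r => (u r).im) (Set.Ioi 0) := by fun_prop
    rw [setIntegral_Ioo_eq ha hab hb _ (fun x hx => by simp [hu0 x hx, hdu0 x hx]),
      ← intervalIntegral.integral_add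
        (intervalIntegrable_of_Ioi ha hab (by exact
          ((hd1.pow 2).add ((hα.pow 2).mul (hd3.pow 2))).mul continuousOn_id))
        (intervalIntegrable_of_Ioi ha hab (by exact
          ((hd2.pow 2).add ((hα.pow 2).mul (hd4.pow 2))).mul continuousOn_id))]
    congr 1; ext r; rw [hsq, hsq, hcr]; push_cast; ring
  have hBc : B = 2 * h * c := by rw [hc]; field_simp
  unfold qm
  rw [hQ, hN, hBc]
  have hsum := mul_le_mul_of_nonneg_left (add_le_add hre him) (sq_nonneg h)
  linarith

/-- min-max form: for `m ≥ 0` and `k ≥ 1`, on every `(k+1)`-dimensional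
complex subspace of `C_c^∞((0,R);ℂ)` there is a nonzero `u` with
`q_m(u) ≥ 2hBk ∫₀^R |u|² r dr`. -/
theorem stmt10 (R B h : ℝ) (hR : 0 < R) (hB : 0 < B) (hh : 0 < h)
    (m : ℕ) (k : ℕ) (hk : 1 ≤ k)
    (V : Submodule ℂ (ℝ → ℂ))
    (hV : ∀ u ∈ V, IsCptSmooth0R R u)
    (hdim : Module.finrank ℂ V = k + 1) :
    ∃ u ∈ V, u ≠ 0 ∧
      qm R B h (m : ℤ) u ≥ 2 * h * B * k *
        ∫ r in Set.Ioo (0:ℝ) R, ‖u r‖ ^ 2 * r := by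
  have hint : ∀ u ∈ V, ∀ w : ℝ → ℝ, Continuous w →
      Integrable (fun r => u r * ((w r : ℝ) : ℂ)) (volume.restrict (Set.Ioo (0:ℝ) R)) := by
    intro u hu w hw
    have huc : Continuous u := (hV u hu).1.continuous
    apply Integrable.restrict
    exact Continuous.integrable_of_hasCompactSupport (by fun_prop) (hV u hu).2.1.mul_right
  let w : ℕ → ℝ → ℝ := fun j r =>
    r ^ (m + 2 * j + 1) * Real.exp (-(B / (2 * h) / 2) * r ^ 2)
  have hw : ∀ j, Continuous (w j) := fun j => by fun_prop
  -- the moments of `u` that must vanish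
  let L : V →ₗ[ℂ] (Fin k → ℂ) :=
    { toFun := fun u j => ∫ r in Set.Ioo (0:ℝ) R, (u : ℝ → ℂ) r * ((w j r : ℝ) : ℂ)
      map_add' := by
        intro u v
        ext j
        simp only [Submodule.coe_add, Pi.add_apply, add_mul]
        exact integral_add (hint u u.2 _ (hw j)) (hint v v.2 _ (hw j))
      map_smul' := by
        intro z u
        ext j
        simp only [Submodule.coe_smul, Pi.smul_apply, smul_eq_mul, mul_assoc, RingHom.id_apply]
        exact integral_const_mul _ _ }
  have hfin : FiniteDimensional ℂ V := Module.finite_of_finrank_pos (by omega)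
  have hker : LinearMap.ker L ≠ ⊥ := LinearMap.ker_ne_bot_of_finrank_lt (by simp [hdim])
  obtain ⟨u, huL, hune⟩ := (Submodule.ne_bot_iff _).1 hker
  refine ⟨u, u.2, fun h0 => hune (Subtype.ext h0), ?_⟩
  apply qm_bound R B h hR hB hh m k u (hV u u.2)
  intro j hj
  exact congrFun (LinearMap.mem_ker.1 huL) ⟨j, hj⟩
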